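/- (Proposition B.4, part 2: concentration of T̂_a under H1.) Assume p ≠ q with δ_K > 0. Then for any 0 < λ < 3 √(c_a ν n), with probability at least 1 − 4 e^{−λ²/8} under the joint product law of the four samples, T̂_a ≥ δ_K − 4 λ √(ν/(c_a n)). -/

import Mathlib

open MeasureTheory Real
open scoped BigOperators ENNReal

/-- The asymmetric empirical MMD statistic `T̂_a` of kernel `K`, computed between the
training sample `dtr = (X₍₁₎, Y₍₁₎)` and the test sample `dte = (X₍₂₎, Y₍₂₎)`. -/
noncomputable def asymMMD {𝒳 : Type*} (K : 𝒳 → 𝒳 → ℝ) (n1X n1Y n2X n2Y : ℕ)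
    (dtr : (Fin n1X → 𝒳) × (Fin n1Y → 𝒳))
    (dte : (Fin n2X → 𝒳) × (Fin n2Y → 𝒳)) : ℝ :=
  (1/((n2X:ℝ)*(n1X:ℝ))) * ∑ i, ∑ j, K (dte.1 i) (dtr.1 j)
  - (1/((n2X:ℝ)*(n1Y:ℝ))) * ∑ i, ∑ j, K (dte.1 i) (dtr.2 j)
  - (1/((n2Y:ℝ)*(n1X:ℝ))) * ∑ i, ∑ j, K (dte.2 i) (dtr.1 j)
  + (1/((n2Y:ℝ)*(n1Y:ℝ))) * ∑ i, ∑ j, K (dte.2 i) (dtr.2 j)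

/-- The squared population MMD `δ_K = ∬ K d(p−q)d(p−q)`, written out as
`∬K dp dp − 2∬K dp dq + ∬K dq dq`. -/
noncomputable def deltaK {𝒳 : Type*} [MeasurableSpace 𝒳] (K : 𝒳 → 𝒳 → ℝ)
    (p q : Measure 𝒳) : ℝ :=
  (∫ x, ∫ y, K x y ∂p ∂p) - 2 * (∫ x, ∫ y, K x y ∂q ∂p) + (∫ x, ∫ y, K x y ∂q ∂q)

/-!
`T̂_a` is a signed sum of four two-sample means of `K`, one for each pair of a test and a training
sample. Following Hoeffding, match the smaller sample injectively into the larger one: shifting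
this matching through the larger sample and averaging recovers the two-sample mean, and each
shifted matching gives the mean of `N` i.i.d. variables `K (x, y)`, with `N` the smaller sample
size. By convexity of `exp` the moment generating function of the two-sample mean is at most that
of such an i.i.d. mean, and `exp u ≤ 1 + u + u²` for `|u| ≤ 1` bounds the latter through the second
moment `ν`. Chernoff's bound gives a deviation of `λ √(ν / N)` probability at most `e^{-λ²/8}`, and
the four tails are combined by a union bound.
-/

open ProbabilityTheory

section MomentGeneratingFunction

variable {Ω : Type*} {mΩ : MeasurableSpace Ω} {P : Measure Ω}

theorem mgf_le_exp_of_abs_le [IsProbabilityMeasure P] {X : Ω → ℝ} {B v t : ℝ}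
    (hX : AEMeasurable X P) (hXB : ∀ᵐ ω ∂P, |X ω| ≤ B) (hv : ∫ ω, X ω ^ 2 ∂P ≤ v)
    (htB : |t| * B ≤ 1) :
    mgf X P t ≤ exp (t * ∫ ω, X ω ∂P + t ^ 2 * v) := by
  have hX_int : Integrable X P := .of_bound hX.aestronglyMeasurable B hXB
  have hX2_int : Integrable (fun ω => X ω ^ 2) P := by
    refine .of_bound (hX.pow_const 2).aestronglyMeasurable (B ^ 2) ?_
    filter_upwards [hXB] with ω hω
    rw [norm_pow, Real.norm_eq_abs]
    gcongr
  have hlin_int : Integrable (fun ω => 1 + t * X ω) P :=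
    (integrable_const 1).add (hX_int.const_mul t)
  have hexp_le : ∀ᵐ ω ∂P, exp (t * X ω) ≤ 1 + t * X ω + t ^ 2 * X ω ^ 2 := by
    filter_upwards [hXB] with ω hω
    have htX : |t * X ω| ≤ 1 := by
      rw [abs_mul]
      exact (mul_le_mul_of_nonneg_left hω (abs_nonneg t)).trans htB
    linarith [(abs_le.1 (abs_exp_sub_one_sub_id_le htX)).2, mul_pow t (X ω) 2]
  calc mgf X P t
      ≤ ∫ ω, (1 + t * X ω + t ^ 2 * X ω ^ 2) ∂P :=
        integral_mono_of_nonneg (.of_forall fun _ => (exp_pos _).le)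
          (hlin_int.add (hX2_int.const_mul _)) hexp_le
    _ = 1 + t * ∫ ω, X ω ∂P + t ^ 2 * ∫ ω, X ω ^ 2 ∂P := by
        rw [integral_add hlin_int (hX2_int.const_mul _),
          integral_add (integrable_const 1) (hX_int.const_mul t), integral_const_mul,
          integral_const_mul, integral_const, probReal_univ, one_smul]
    _ ≤ t * ∫ ω, X ω ∂P + t ^ 2 * v + 1 := by
        linarith [mul_le_mul_of_nonneg_left hv (sq_nonneg t)]
    _ ≤ exp (t * ∫ ω, X ω ∂P + t ^ 2 * v) := add_one_le_exp _

theorem exp_expect_le {ι : Type*} [Fintype ι] [Nonempty ι] (a : ι → ℝ) :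
    exp (𝔼 i, a i) ≤ 𝔼 i, exp (a i) := by
  have h := convexOn_exp.map_sum_le (t := Finset.univ) (w := fun _ : ι => (Fintype.card ι : ℝ)⁻¹)
    (p := a) (fun _ _ => by positivity) (by simp) (fun _ _ => Set.mem_univ _)
  simpa only [smul_eq_mul, ← Finset.mul_sum, Fintype.expect_eq_sum_div_card, div_eq_inv_mul]
    using h

theorem mgf_expect_le {ι : Type*} [Fintype ι] [Nonempty ι] {X : ι → Ω → ℝ} {t : ℝ}
    (hX : ∀ i, Integrable (fun ω => exp (t * X i ω)) P) :
    mgf (fun ω => 𝔼 i, X i ω) P t ≤ 𝔼 i, mgf (X i) P t := by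
  have hsum_int : Integrable (fun ω => ∑ i, exp (t * X i ω)) P :=
    integrable_finsetSum _ fun i _ => hX i
  calc mgf (fun ω => 𝔼 i, X i ω) P t
      ≤ ∫ ω, (∑ i, exp (t * X i ω)) / Fintype.card ι ∂P := by
        refine integral_mono_of_nonneg (.of_forall fun _ => (exp_pos _).le)
          (hsum_int.div_const _) (.of_forall fun ω => ?_)
        dsimp only
        rw [Finset.mul_expect, ← Fintype.expect_eq_sum_div_card]
        exact exp_expect_le _
    _ = 𝔼 i, mgf (X i) P t := by
        rw [integral_div, integral_finsetSum _ fun i _ => hX i, Fintype.expect_eq_sum_div_card]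
        rfl

end MomentGeneratingFunction

theorem measureReal_sum_lt_le {Ω ι : Type*} [Fintype ι] {mΩ : MeasurableSpace Ω} {P : Measure Ω}
    [IsFiniteMeasure P] {X : ι → Ω → ℝ} {a : ι → ℝ} {τ ε : ℝ}
    (hX : ∀ i, P.real {ω | X i ω ≤ a i - τ} ≤ ε) :
    P.real {ω | ∑ i, X i ω < ∑ i, a i - Fintype.card ι * τ} ≤ Fintype.card ι * ε := by
  have hsubset : {ω | ∑ i, X i ω < ∑ i, a i - Fintype.card ι * τ} ⊆
      ⋃ i, {ω | X i ω ≤ a i - τ} := by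
    intro ω hω
    have hlt : ∑ i, X i ω < ∑ i, (a i - τ) := by
      simpa only [Finset.sum_sub_distrib, Finset.sum_const, Finset.card_univ, nsmul_eq_mul,
        Set.mem_ofPred_eq] using hω
    obtain ⟨i, -, hi⟩ := Finset.exists_lt_of_sum_lt hlt
    exact Set.mem_iUnion.2 ⟨i, hi.le⟩
  calc P.real {ω | ∑ i, X i ω < ∑ i, a i - Fintype.card ι * τ}
      ≤ P.real (⋃ i, {ω | X i ω ≤ a i - τ}) := measureReal_mono hsubset
    _ ≤ ∑ i, P.real {ω | X i ω ≤ a i - τ} := measureReal_iUnion_fintype_le _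
    _ ≤ ∑ _i : ι, ε := Finset.sum_le_sum fun i _ => hX i
    _ = Fintype.card ι * ε := by rw [Finset.sum_const, Finset.card_univ, nsmul_eq_mul]

theorem one_sub_ofReal_le_of_measureReal_compl_le {Ω : Type*} {mΩ : MeasurableSpace Ω}
    {P : Measure Ω} [IsProbabilityMeasure P] {s : Set Ω} {ε : ℝ} (hs : P.real sᶜ ≤ ε) :
    1 - ENNReal.ofReal ε ≤ P s := by
  rw [tsub_le_iff_right]
  calc 1 = P Set.univ := measure_univ.symm
    _ ≤ P s + P sᶜ := measure_univ_le_add_compl s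
    _ = P s + ENNReal.ofReal (P.real sᶜ) := by rw [ofReal_measureReal]
    _ ≤ P s + ENNReal.ofReal ε := by gcongr

section TwoSample

variable {ι κ α β : Type*} [Fintype ι] [Fintype κ]

/-- The two-sample mean of `f`, i.e. the two-sample U-statistic of degree `(1, 1)`: the average
of `f (xᵢ, yⱼ)` over all pairs of observations of the samples `z = (x, y)`. -/
noncomputable def twoSampleMean (f : α × β → ℝ) (z : (ι → α) × (κ → β)) : ℝ :=
  𝔼 i, 𝔼 j, f (z.1 i, z.2 j)

theorem twoSampleMean_swap (f : α × β → ℝ) (z : (κ → β) × (ι → α)) :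
    twoSampleMean f z.swap = twoSampleMean (f ∘ Prod.swap) z :=
  Finset.expect_comm _ _ _

theorem twoSampleMean_neg (f : α × β → ℝ) (z : (ι → α) × (κ → β)) :
    twoSampleMean (-f) z = -twoSampleMean f z := by
  simp only [twoSampleMean, Pi.neg_apply, Finset.expect_neg_distrib]

theorem twoSampleMean_le [Nonempty ι] [Nonempty κ] {f : α × β → ℝ} {B : ℝ} (hf : ∀ w, f w ≤ B)
    (z : (ι → α) × (κ → β)) : twoSampleMean f z ≤ B :=
  Finset.expect_le Finset.univ_nonempty fun _ _ =>
    Finset.expect_le Finset.univ_nonempty fun _ _ => hf _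

theorem twoSampleMean_eq_sum (f : α × β → ℝ) (z : (ι → α) × (κ → β)) :
    twoSampleMean f z =
      1 / ((Fintype.card ι : ℝ) * Fintype.card κ) * ∑ i, ∑ j, f (z.1 i, z.2 j) := by
  simp only [twoSampleMean, Fintype.expect_eq_sum_div_card, ← Finset.sum_div]
  rw [div_div, mul_comm (Fintype.card κ : ℝ), one_div_mul_eq_div]

theorem twoSampleMean_eq_expect_shift [AddGroup κ] (e : ι → κ) (f : α × β → ℝ)
    (z : (κ → α) × (ι → β)) :
    twoSampleMean f z = 𝔼 s, 𝔼 j, f (z.1 (e j + s), z.2 j) := by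
  rw [twoSampleMean, Finset.expect_comm, Finset.expect_comm (s := Finset.univ (α := κ))]
  refine Finset.expect_congr rfl fun j _ => ?_
  exact (Fintype.expect_equiv (Equiv.addLeft (e j)) _ _ fun _ => rfl).symm

variable [MeasurableSpace α] [MeasurableSpace β] {μ : Measure α} {η : Measure β}

theorem measurable_twoSampleMean {f : α × β → ℝ} (hf : Measurable f) :
    Measurable (twoSampleMean f : (ι → α) × (κ → β) → ℝ) := by
  simp only [funext (twoSampleMean_eq_sum f)]
  fun_prop

variable (ι κ μ η) in
/-- The joint law of two independent samples, one i.i.d. from `μ` and indexed by `ι`, the other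
i.i.d. from `η` and indexed by `κ`. -/
noncomputable abbrev twoSampleLaw : Measure ((ι → α) × (κ → β)) :=
  (Measure.pi fun _ : ι => μ).prod (Measure.pi fun _ : κ => η)

theorem measurePreserving_pi_comp_injective [IsProbabilityMeasure μ] {e : ι → κ}
    (he : e.Injective) :
    MeasurePreserving (fun (x : κ → α) j => x (e j)) (Measure.pi fun _ : κ => μ)
      (Measure.pi fun _ : ι => μ) where
  measurable := by fun_prop
  map_eq := by
    have hindep : iIndepFun (fun (i : κ) (x : κ → α) => x i) (Measure.pi fun _ => μ) :=
      iIndepFun_pi (X := fun _ => id) fun _ => aemeasurable_id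
    rw [(hindep.precomp he).map_fun_eq_pi_map fun j => (measurable_pi_apply (e j)).aemeasurable]
    simp only [(measurePreserving_eval (fun _ : κ => μ) _).map_eq]

variable [IsProbabilityMeasure μ] [IsProbabilityMeasure η]

theorem measurePreserving_twoSampleLaw_match {e : ι → κ} (he : e.Injective) :
    MeasurePreserving (fun (z : (κ → α) × (ι → β)) j => (z.1 (e j), z.2 j))
      (twoSampleLaw κ ι μ η) (Measure.pi fun _ : ι => μ.prod η) :=
  (measurePreserving_arrowProdEquivProdArrow α β ι (fun _ => μ) fun _ => η).symm.comp
    ((measurePreserving_pi_comp_injective he).prod (.id _))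

theorem mgf_sum_match {f : α × β → ℝ} (hf : Measurable f) {e : ι → κ} (he : e.Injective) (t : ℝ) :
    mgf (fun z : (κ → α) × (ι → β) => ∑ j, f (z.1 (e j), z.2 j)) (twoSampleLaw κ ι μ η) t =
      mgf f (μ.prod η) t ^ Fintype.card ι := by
  have hmatch := measurePreserving_twoSampleLaw_match (μ := μ) (η := η) he
  calc mgf (fun z : (κ → α) × (ι → β) => ∑ j, f (z.1 (e j), z.2 j)) (twoSampleLaw κ ι μ η) t
      = mgf (fun w : ι → α × β => ∑ j, f (w j)) (Measure.pi fun _ => μ.prod η) t := by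
        rw [← hmatch.map_eq, mgf_map hmatch.aemeasurable
          (Measurable.aestronglyMeasurable (by fun_prop))]
        rfl
    _ = ∫ w : ι → α × β, ∏ j, exp (t * f (w j)) ∂Measure.pi fun _ => μ.prod η := by
        simp only [mgf, Finset.mul_sum, exp_sum]
    _ = mgf f (μ.prod η) t ^ Fintype.card ι :=
        integral_fintype_prod_eq_pow fun w => exp (t * f w)

theorem mgf_twoSampleMean_le [Nonempty κ] {f : α × β → ℝ} {t : ℝ} (hf : Measurable f)
    (hf_int : Integrable (fun w => exp (t * f w)) (μ.prod η))
    (hcard : Fintype.card ι ≤ Fintype.card κ) :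
    mgf (twoSampleMean f) (twoSampleLaw κ ι μ η) (Fintype.card ι * t) ≤
      mgf f (μ.prod η) t ^ Fintype.card ι := by
  obtain ⟨e⟩ := Function.Embedding.nonempty_of_card_le hcard
  -- Any group structure on `κ` will do: it provides the shifts of `e`.
  have : NeZero (Fintype.card κ) := ⟨Fintype.card_ne_zero⟩
  let : AddGroup κ := (Fintype.equivFin κ).addGroup
  have he (s : κ) : Function.Injective fun j => e j + s := (add_left_injective s).comp e.injective
  let X (s : κ) (z : (κ → α) × (ι → β)) : ℝ := 𝔼 j, f (z.1 (e j + s), z.2 j)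
  have hX (s : κ) (z) : Fintype.card ι * t * X s z = t * ∑ j, f (z.1 (e j + s), z.2 j) := by
    rw [mul_right_comm, Fintype.card_mul_expect, mul_comm]
  have hX_mgf (s : κ) : mgf (X s) (twoSampleLaw κ ι μ η) (Fintype.card ι * t) =
      mgf f (μ.prod η) t ^ Fintype.card ι := by
    rw [← mgf_sum_match hf (he s) t]
    simp only [mgf, hX]
  have hX_int (s : κ) :
      Integrable (fun z => exp (Fintype.card ι * t * X s z)) (twoSampleLaw κ ι μ η) := by
    rw [← mgf_pos_iff, hX_mgf]
    exact pow_pos (mgf_pos hf_int) _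
  calc mgf (twoSampleMean f) (twoSampleLaw κ ι μ η) (Fintype.card ι * t)
      = mgf (fun z => 𝔼 s, X s z) (twoSampleLaw κ ι μ η) (Fintype.card ι * t) := by
        rw [funext (twoSampleMean_eq_expect_shift e f)]
    _ ≤ 𝔼 s, mgf (X s) (twoSampleLaw κ ι μ η) (Fintype.card ι * t) := mgf_expect_le hX_int
    _ = mgf f (μ.prod η) t ^ Fintype.card ι := by simp only [hX_mgf, Fintype.expect_const]

variable {f : α × β → ℝ} {B v τ : ℝ}

theorem measureReal_le_twoSampleMean_of_card_le [Nonempty ι] (hf : Measurable f)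
    (hfB : ∀ w, |f w| ≤ B) (hv : ∫ w, f w ^ 2 ∂μ.prod η ≤ v) (hv_pos : 0 < v) (hτ : 0 ≤ τ)
    (hτB : τ * B ≤ 4 * v) (hcard : Fintype.card ι ≤ Fintype.card κ) :
    (twoSampleLaw κ ι μ η).real {z | ∫ w, f w ∂μ.prod η + τ ≤ twoSampleMean f z} ≤
      exp (-(Fintype.card ι * τ ^ 2 / (8 * v))) := by
  have : Nonempty κ := (Function.Embedding.nonempty_of_card_le hcard).elim fun e =>
    .map e inferInstance
  set m : ℝ := (Fintype.card ι : ℝ) with hm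
  set E := ∫ w, f w ∂μ.prod η with hE
  -- The optimal `t = τ / (2 * v)` would violate `t * B ≤ 1` for the larger admissible `τ`.
  obtain ⟨t, ht⟩ : ∃ t, t = τ / (4 * v) := ⟨_, rfl⟩
  have ht_nonneg : 0 ≤ t := ht ▸ by positivity
  have htB : |t| * B ≤ 1 := by
    rw [abs_of_nonneg ht_nonneg, ht, div_mul_eq_mul_div]
    exact div_le_one_of_le₀ hτB (by positivity)
  have hf_le (w) : f w ≤ B := (le_abs_self _).trans (hfB w)
  have hexp_int : Integrable (fun w => exp (t * f w)) (μ.prod η) :=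
    integrable_exp_mul_of_le t B ht_nonneg hf.aemeasurable (.of_forall hf_le)
  have hmean_int : Integrable (fun z => exp (m * t * twoSampleMean f z)) (twoSampleLaw κ ι μ η) :=
    integrable_exp_mul_of_le _ B (by positivity) (measurable_twoSampleMean hf).aemeasurable
      (.of_forall (twoSampleMean_le hf_le))
  calc (twoSampleLaw κ ι μ η).real {z | E + τ ≤ twoSampleMean f z}
      ≤ exp (-(m * t) * (E + τ)) * mgf (twoSampleMean f) (twoSampleLaw κ ι μ η) (m * t) :=
        measure_ge_le_exp_mul_mgf _ (by positivity) hmean_int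
    _ ≤ exp (-(m * t) * (E + τ)) * exp (t * E + t ^ 2 * v) ^ Fintype.card ι := by
        gcongr
        refine (mgf_twoSampleMean_le hf hexp_int hcard).trans ?_
        gcongr
        · exact mgf_nonneg
        · exact mgf_le_exp_of_abs_le hf.aemeasurable (.of_forall hfB) hv htB
    _ = exp (-(3 / 2 * (m * τ ^ 2 / (8 * v)))) := by
        rw [← exp_nat_mul, ← exp_add, ← hm, ht]
        congr 1
        field_simp
        ring
    _ ≤ exp (-(m * τ ^ 2 / (8 * v))) := by
        have : 0 ≤ m * τ ^ 2 / (8 * v) := by positivity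
        gcongr
        linarith

theorem measureReal_le_twoSampleMean [Nonempty ι] [Nonempty κ] (hf : Measurable f)
    (hfB : ∀ w, |f w| ≤ B) (hv : ∫ w, f w ^ 2 ∂μ.prod η ≤ v) (hv_pos : 0 < v) (hτ : 0 ≤ τ)
    (hτB : τ * B ≤ 4 * v) :
    (twoSampleLaw ι κ μ η).real {z | ∫ w, f w ∂μ.prod η + τ ≤ twoSampleMean f z} ≤
      exp (-(min (Fintype.card ι : ℝ) (Fintype.card κ) * τ ^ 2 / (8 * v))) := by
  rcases le_total (Fintype.card κ) (Fintype.card ι) with hcard | hcard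
  · rw [min_eq_right (mod_cast hcard)]
    exact measureReal_le_twoSampleMean_of_card_le hf hfB hv hv_pos hτ hτB hcard
  · have hmeas : MeasurableSet
        {z : (ι → α) × (κ → β) | ∫ w, f w ∂μ.prod η + τ ≤ twoSampleMean f z} :=
      measurableSet_le measurable_const (measurable_twoSampleMean hf)
    rw [min_eq_left (mod_cast hcard), ← (Measure.measurePreserving_swap
      (μ := Measure.pi fun _ : κ => η) (ν := Measure.pi fun _ : ι => μ)).measureReal_preimage
      hmeas.nullMeasurableSet]
    simp only [Set.preimage_ofPred_eq, twoSampleMean_swap]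
    rw [← integral_prod_swap]
    rw [← integral_prod_swap] at hv
    exact measureReal_le_twoSampleMean_of_card_le (hf.comp measurable_swap)
      (fun w => hfB w.swap) hv hv_pos hτ hτB hcard

theorem measureReal_twoSampleMean_le_sub_sqrt {Ω : Type*} {mΩ : MeasurableSpace Ω} {P : Measure Ω}
    {Z : Ω → (ι → α) × (κ → β)} {N lam : ℝ} (hZ : MeasurePreserving Z P (twoSampleLaw ι κ μ η))
    (hf : Measurable f) (hfB : ∀ w, |f w| ≤ B) (hv : ∫ w, f w ^ 2 ∂μ.prod η ≤ v) (hv_pos : 0 < v)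
    (hN : 0 < N) (hNι : N ≤ Fintype.card ι) (hNκ : N ≤ Fintype.card κ) (hlam : 0 ≤ lam)
    (hlamB : lam * B ≤ 4 * √(N * v)) :
    P.real {ω | twoSampleMean f (Z ω) ≤ ∫ w, f w ∂μ.prod η - lam * √(v / N)} ≤
      exp (-lam ^ 2 / 8) := by
  have : Nonempty ι := Fintype.card_pos_iff.1 (mod_cast hN.trans_le hNι)
  have : Nonempty κ := Fintype.card_pos_iff.1 (mod_cast hN.trans_le hNκ)
  have hτB : lam * √(v / N) * B ≤ 4 * v := by
    calc lam * √(v / N) * B = lam * B * √(v / N) := by ring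
      _ ≤ 4 * √(N * v) * √(v / N) := by gcongr
      _ = 4 * √(v ^ 2) := by rw [mul_assoc, ← sqrt_mul (by positivity)]; field_simp
      _ = 4 * v := by rw [sqrt_sq hv_pos.le]
  have hmeas : MeasurableSet {z : (ι → α) × (κ → β) |
      twoSampleMean f z ≤ ∫ w, f w ∂μ.prod η - lam * √(v / N)} :=
    measurableSet_le (measurable_twoSampleMean hf) measurable_const
  calc P.real {ω | twoSampleMean f (Z ω) ≤ ∫ w, f w ∂μ.prod η - lam * √(v / N)}
      = (twoSampleLaw ι κ μ η).real
          {z | twoSampleMean f z ≤ ∫ w, f w ∂μ.prod η - lam * √(v / N)} :=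
        hZ.measureReal_preimage hmeas.nullMeasurableSet
    _ = (twoSampleLaw ι κ μ η).real
          {z | ∫ w, (-f) w ∂μ.prod η + lam * √(v / N) ≤ twoSampleMean (-f) z} := by
        simp only [twoSampleMean_neg, Pi.neg_apply, integral_neg]
        congr! 3 with z
        constructor <;> intro h <;> linarith
    _ ≤ exp (-(min (Fintype.card ι : ℝ) (Fintype.card κ) * (lam * √(v / N)) ^ 2 / (8 * v))) :=
        measureReal_le_twoSampleMean hf.neg (by simpa using hfB) (by simpa using hv) hv_pos
          (by positivity) hτB
    _ ≤ exp (-(N * (lam * √(v / N)) ^ 2 / (8 * v))) := by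
        gcongr
        exact le_min hNι hNκ
    _ = exp (-lam ^ 2 / 8) := by
        rw [mul_pow, sq_sqrt (by positivity)]
        field_simp

end TwoSample

theorem asymMMD_eq_twoSampleMean {𝒳 : Type*} (K : 𝒳 → 𝒳 → ℝ) {n1X n1Y n2X n2Y : ℕ}
    (dtr : (Fin n1X → 𝒳) × (Fin n1Y → 𝒳)) (dte : (Fin n2X → 𝒳) × (Fin n2Y → 𝒳)) :
    asymMMD K n1X n1Y n2X n2Y dtr dte =
      twoSampleMean (Function.uncurry K) (dte.1, dtr.1)
        - twoSampleMean (Function.uncurry K) (dte.1, dtr.2)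
        - twoSampleMean (Function.uncurry K) (dte.2, dtr.1)
        + twoSampleMean (Function.uncurry K) (dte.2, dtr.2) := by
  simp only [asymMMD, twoSampleMean_eq_sum, Fintype.card_fin, Function.uncurry_apply_pair]

theorem integral_prod_comm_of_swap_eq {α E : Type*} [MeasurableSpace α] [NormedAddCommGroup E]
    [NormedSpace ℝ E] {f : α × α → E} (hf : ∀ w, f w.swap = f w) (p q : Measure α) [SFinite p]
    [SFinite q] :
    ∫ w, f w ∂q.prod p = ∫ w, f w ∂p.prod q := by
  rw [← integral_prod_swap]
  simp only [hf]

theorem deltaK_eq_integral_prod {𝒳 : Type*} [MeasurableSpace 𝒳] {K : 𝒳 → 𝒳 → ℝ}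
    {p q : Measure 𝒳} [SFinite p] [SFinite q] (hKsym : ∀ x y, K x y = K y x)
    (hpp : Integrable (Function.uncurry K) (p.prod p))
    (hpq : Integrable (Function.uncurry K) (p.prod q))
    (hqq : Integrable (Function.uncurry K) (q.prod q)) :
    deltaK K p q = ∫ w, Function.uncurry K w ∂p.prod p - ∫ w, Function.uncurry K w ∂p.prod q
      - ∫ w, Function.uncurry K w ∂q.prod p + ∫ w, Function.uncurry K w ∂q.prod q := by
  rw [integral_prod_comm_of_swap_eq (fun w => hKsym w.2 w.1) p q, integral_prod _ hpp,
    integral_prod _ hpq, integral_prod _ hqq]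
  simp only [deltaK, Function.uncurry_apply_pair]
  ring

theorem measurePreserving_prodMap_comp_swap {α β γ δ : Type*} [MeasurableSpace α]
    [MeasurableSpace β] [MeasurableSpace γ] [MeasurableSpace δ] {μa : Measure α} {μb : Measure β}
    {μc : Measure γ} {μd : Measure δ} [SFinite μa] [SFinite μb] [SFinite μc] {g : α → γ}
    {h : β → δ} (hg : MeasurePreserving g μa μc) (hh : MeasurePreserving h μb μd) :
    MeasurePreserving (fun w : α × β => (h w.2, g w.1)) (μa.prod μb) (μd.prod μc) :=
  (hh.prod hg).comp Measure.measurePreserving_swap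

section Concentration

variable {𝒳 : Type*} [MeasurableSpace 𝒳] {K : 𝒳 → 𝒳 → ℝ} {p q : Measure 𝒳}
  {n1X n1Y n2X n2Y : ℕ}

theorem measureReal_asymMMD_lt_le_of_twoSampleMean [SFinite p] [SFinite q]
    {P : Measure (((Fin n1X → 𝒳) × (Fin n1Y → 𝒳)) × ((Fin n2X → 𝒳) × (Fin n2Y → 𝒳)))}
    [IsFiniteMeasure P] {τ ε : ℝ} (hKsym : ∀ x y, K x y = K y x)
    (hpp : Integrable (Function.uncurry K) (p.prod p))
    (hpq : Integrable (Function.uncurry K) (p.prod q))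
    (hqq : Integrable (Function.uncurry K) (q.prod q))
    (hXX : P.real {ω | twoSampleMean (Function.uncurry K) (ω.2.1, ω.1.1) ≤
      ∫ w, Function.uncurry K w ∂p.prod p - τ} ≤ ε)
    (hXY : P.real {ω | twoSampleMean (-Function.uncurry K) (ω.2.1, ω.1.2) ≤
      ∫ w, (-Function.uncurry K) w ∂p.prod q - τ} ≤ ε)
    (hYX : P.real {ω | twoSampleMean (-Function.uncurry K) (ω.2.2, ω.1.1) ≤
      ∫ w, (-Function.uncurry K) w ∂q.prod p - τ} ≤ ε)
    (hYY : P.real {ω | twoSampleMean (Function.uncurry K) (ω.2.2, ω.1.2) ≤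
      ∫ w, Function.uncurry K w ∂q.prod q - τ} ≤ ε) :
    P.real {ω | asymMMD K n1X n1Y n2X n2Y ω.1 ω.2 < deltaK K p q - 4 * τ} ≤ 4 * ε := by
  set k := Function.uncurry K
  have hunion := measureReal_sum_lt_le (P := P)
    (X := ![fun ω => twoSampleMean k (ω.2.1, ω.1.1), fun ω => twoSampleMean (-k) (ω.2.1, ω.1.2),
      fun ω => twoSampleMean (-k) (ω.2.2, ω.1.1), fun ω => twoSampleMean k (ω.2.2, ω.1.2)])
    (a := ![∫ w, k w ∂p.prod p, ∫ w, (-k) w ∂p.prod q, ∫ w, (-k) w ∂q.prod p,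
      ∫ w, k w ∂q.prod q])
    (Fin.forall_fin_succ.2 ⟨hXX, Fin.forall_fin_succ.2 ⟨hXY, Fin.forall_fin_two.2 ⟨hYX, hYY⟩⟩⟩)
  simpa [Fin.sum_univ_four, ← sub_eq_add_neg, twoSampleMean_neg, integral_neg,
    asymMMD_eq_twoSampleMean, deltaK_eq_integral_prod hKsym hpp hpq hqq] using hunion

variable [IsProbabilityMeasure p] [IsProbabilityMeasure q]

theorem measureReal_asymMMD_lt_sub_sqrt_le (hKmeas : Measurable (Function.uncurry K))
    (hKsym : ∀ x y, K x y = K y x) {ν N lam B : ℝ} (hKB : ∀ w, |Function.uncurry K w| ≤ B)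
    (hνpp : ∫ w, Function.uncurry K w ^ 2 ∂p.prod p ≤ ν)
    (hνpq : ∫ w, Function.uncurry K w ^ 2 ∂p.prod q ≤ ν)
    (hνqq : ∫ w, Function.uncurry K w ^ 2 ∂q.prod q ≤ ν) (hν : 0 < ν) (hN : 0 < N)
    (h1X : N ≤ n1X) (h1Y : N ≤ n1Y) (h2X : N ≤ n2X) (h2Y : N ≤ n2Y) (hlam : 0 ≤ lam)
    (hlamB : lam * B ≤ 4 * √(N * ν)) :
    ((twoSampleLaw (Fin n1X) (Fin n1Y) p q).prod (twoSampleLaw (Fin n2X) (Fin n2Y) p q)).real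
      {ω | asymMMD K n1X n1Y n2X n2Y ω.1 ω.2 < deltaK K p q - 4 * (lam * √(ν / N))} ≤
      4 * exp (-lam ^ 2 / 8) := by
  set k := Function.uncurry K
  have hk_int (μ : Measure (𝒳 × 𝒳)) [IsProbabilityMeasure μ] : Integrable k μ :=
    .of_bound hKmeas.aestronglyMeasurable B (.of_forall hKB)
  have hνqp : ∫ w, k w ^ 2 ∂q.prod p ≤ ν :=
    (integral_prod_comm_of_swap_eq (fun w => congrArg (· ^ 2) (hKsym w.2 w.1)) p q).trans_le hνpq
  have hneg_bdd (w) : |(-k) w| ≤ B := (abs_neg (k w)).trans_le (hKB w)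
  have hX₁ : MeasurePreserving Prod.fst (twoSampleLaw (Fin n1X) (Fin n1Y) p q)
    (Measure.pi fun _ => p) := measurePreserving_fst
  have hY₁ : MeasurePreserving Prod.snd (twoSampleLaw (Fin n1X) (Fin n1Y) p q)
    (Measure.pi fun _ => q) := measurePreserving_snd
  have hX₂ : MeasurePreserving Prod.fst (twoSampleLaw (Fin n2X) (Fin n2Y) p q)
    (Measure.pi fun _ => p) := measurePreserving_fst
  have hY₂ : MeasurePreserving Prod.snd (twoSampleLaw (Fin n2X) (Fin n2Y) p q)
    (Measure.pi fun _ => q) := measurePreserving_snd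
  rw [← Fintype.card_fin n1X] at h1X
  rw [← Fintype.card_fin n1Y] at h1Y
  rw [← Fintype.card_fin n2X] at h2X
  rw [← Fintype.card_fin n2Y] at h2Y
  have hXX := measureReal_twoSampleMean_le_sub_sqrt (measurePreserving_prodMap_comp_swap hX₁ hX₂)
    hKmeas hKB hνpp hν hN h2X h1X hlam hlamB
  have hXY := measureReal_twoSampleMean_le_sub_sqrt (measurePreserving_prodMap_comp_swap hY₁ hX₂)
    hKmeas.neg hneg_bdd (by simpa only [Pi.neg_apply, neg_sq] using hνpq) hν hN h2X h1Y hlam hlamB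
  have hYX := measureReal_twoSampleMean_le_sub_sqrt (measurePreserving_prodMap_comp_swap hX₁ hY₂)
    hKmeas.neg hneg_bdd (by simpa only [Pi.neg_apply, neg_sq] using hνqp) hν hN h2Y h1X hlam hlamB
  have hYY := measureReal_twoSampleMean_le_sub_sqrt (measurePreserving_prodMap_comp_swap hY₁ hY₂)
    hKmeas hKB hνqq hν hN h2Y h1Y hlam hlamB
  exact measureReal_asymMMD_lt_le_of_twoSampleMean hKsym (hk_int _) (hk_int _) (hk_int _)
    hXX hXY hYX hYY

end Concentration

theorem asym_mmd_concentration_H1_general {𝒳 : Type*} [MeasurableSpace 𝒳] (K : 𝒳 → 𝒳 → ℝ)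
    (hKmeas : Measurable (Function.uncurry K)) (hKsym : ∀ x y, K x y = K y x)
    (hKbdd : ∀ x y, |K x y| ≤ 1) (p q : Measure 𝒳) [IsProbabilityMeasure p]
    [IsProbabilityMeasure q] (ν : ℝ) (hνpp : ∫ x, ∫ y, K x y ^ 2 ∂p ∂p ≤ ν)
    (hνpq : ∫ x, ∫ y, K x y ^ 2 ∂q ∂p ≤ ν) (hνqq : ∫ x, ∫ y, K x y ^ 2 ∂q ∂q ≤ ν)
    (n1X n1Y n2X n2Y : ℕ) (N : ℝ) (h1X : N ≤ n1X) (h1Y : N ≤ n1Y) (h2X : N ≤ n2X)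
    (h2Y : N ≤ n2Y) (lam : ℝ) (hlam : 0 < lam) (hlamN : lam ≤ 4 * √(N * ν)) :
    1 - ENNReal.ofReal (4 * exp (-lam ^ 2 / 8)) ≤
      ((twoSampleLaw (Fin n1X) (Fin n1Y) p q).prod (twoSampleLaw (Fin n2X) (Fin n2Y) p q))
        {ω | deltaK K p q - 4 * lam * √(ν / N) ≤ asymMMD K n1X n1Y n2X n2Y ω.1 ω.2} := by
  have hNν : 0 < N * ν := sqrt_pos.1 (by linarith)
  have hν : 0 < ν := ((integral_nonneg fun x => integral_nonneg fun y =>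
    sq_nonneg (K x y)).trans hνpp).lt_of_ne' (right_ne_zero_of_mul hNν.ne')
  have hN : 0 < N := pos_of_mul_pos_left hNν hν.le
  have hsq_int (μ : Measure (𝒳 × 𝒳)) [IsProbabilityMeasure μ] :
      Integrable (fun w => Function.uncurry K w ^ 2) μ :=
    .of_bound (hKmeas.pow_const 2).aestronglyMeasurable 1 <| .of_forall fun w => by
      rw [norm_pow]
      exact pow_le_one₀ (norm_nonneg _) (hKbdd w.1 w.2)
  refine one_sub_ofReal_le_of_measureReal_compl_le ?_
  simp only [Set.compl_ofPred, not_le, mul_assoc]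
  exact measureReal_asymMMD_lt_sub_sqrt_le hKmeas hKsym (fun w => hKbdd w.1 w.2)
    ((integral_prod _ (hsq_int _)).trans_le hνpp) ((integral_prod _ (hsq_int _)).trans_le hνpq)
    ((integral_prod _ (hsq_int _)).trans_le hνqq) hν hN h1X h1Y h2X h2Y hlam.le (by rwa [mul_one])

/-- Proposition B.4, part 2: under `H₁ : p ≠ q` with `δ_K > 0`, for `0 < λ < 3√(c_aνn)`,
with probability at least `1 − 4e^{−λ²/8}` under the joint product law of the four
samples, `T̂_a ≥ δ_K − 4λ√(ν/(c_a n))`. -/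
theorem asym_mmd_concentration_H1
    {d : ℕ} (𝒳 : Set (EuclideanSpace ℝ (Fin d))) (h𝒳 : MeasurableSet 𝒳)
    (K : 𝒳 → 𝒳 → ℝ)
    (hKmeas : Measurable (Function.uncurry K))
    (hKsym : ∀ x y, K x y = K y x)
    (hKpsd : ∀ (m : ℕ) (z : Fin m → 𝒳) (a : Fin m → ℝ),
      0 ≤ ∑ i, ∑ j, a i * a j * K (z i) (z j))
    (hKbdd : ∀ x y, |K x y| ≤ 1)
    (p q : Measure 𝒳) [IsProbabilityMeasure p] [IsProbabilityMeasure q]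
    (ν : ℝ) (hν1 : ν ≤ 1)
    (hνpp : ∫ x, ∫ y, (K x y)^2 ∂p ∂p ≤ ν)
    (hνpq : ∫ x, ∫ y, (K x y)^2 ∂q ∂p ≤ ν)
    (hνqq : ∫ x, ∫ y, (K x y)^2 ∂q ∂q ≤ ν)
    (n1X n1Y n2X n2Y : ℕ) (ca : ℝ) (hca : 0 < ca) (hca1 : ca < 1)
    (hbal1 : ca * ((n1X + n1Y + n2X + n2Y : ℕ) : ℝ) ≤ (n1X : ℝ))
    (hbal2 : ca * ((n1X + n1Y + n2X + n2Y : ℕ) : ℝ) ≤ (n1Y : ℝ))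
    (hbal3 : ca * ((n1X + n1Y + n2X + n2Y : ℕ) : ℝ) ≤ (n2X : ℝ))
    (hbal4 : ca * ((n1X + n1Y + n2X + n2Y : ℕ) : ℝ) ≤ (n2Y : ℝ))
    (hH1 : p ≠ q) (hδ : 0 < deltaK K p q)
    (lam : ℝ) (hlam : 0 < lam)
    (hlam' : lam < 3 * Real.sqrt (ca * ν * ((n1X + n1Y + n2X + n2Y : ℕ) : ℝ))) :
    1 - ENNReal.ofReal (4 * Real.exp (-lam^2 / 8)) ≤
      (((Measure.pi fun _ : Fin n1X => p).prod (Measure.pi fun _ : Fin n1Y => q)).prod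
        ((Measure.pi fun _ : Fin n2X => p).prod (Measure.pi fun _ : Fin n2Y => q)))
        {ω : ((Fin n1X → 𝒳) × (Fin n1Y → 𝒳)) × ((Fin n2X → 𝒳) × (Fin n2Y → 𝒳)) |
          deltaK K p q - 4 * lam * Real.sqrt (ν/(ca * ((n1X + n1Y + n2X + n2Y : ℕ) : ℝ)))
            ≤ asymMMD K n1X n1Y n2X n2Y ω.1 ω.2} := by
  refine asym_mmd_concentration_H1_general K hKmeas hKsym hKbdd p q ν hνpp hνpq hνqq n1X n1Y n2X n2Y
    _ hbal1 hbal2 hbal3 hbal4 lam hlam (hlam'.le.trans ?_)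
  rw [mul_right_comm]
  gcongr
  norm_num
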